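/- (Theorem 1, Convergence of reservoir systems on graphs.) Let Ã be a symmetric N×N real matrix, W an H×H real matrix, V an F×H real matrix, and X an N×F real matrix; set K = ρ(Ã) · ‖W‖₂ and assume 0 < K < 1. Let H* be the unique fixed point of the reservoir map Φ(M) = tanh(Ã M W + X V), let the iterates start from the zero initial condition H₀ = 0 (so that H₁ = tanh(X V)), and assume h := ‖tanh(X V)‖_F > 0. Then for every convergence threshold ε > 0 and every natural number t with t ≥ (ln ε + ln(1 − K) − ln h) / ln K, one has ‖H* − H_t‖_F ≤ ε. -/

import Mathlib

noncomputable def frobNorm {m n : Type*} [Fintype m] [Fintype n]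
    (M : Matrix m n ℝ) : ℝ :=
  Real.sqrt (∑ i, ∑ j, (M i j) ^ 2)

noncomputable def specNorm {m n : ℕ} (M : Matrix (Fin m) (Fin n) ℝ) : ℝ :=
  ‖LinearMap.toContinuousLinearMap (Matrix.toEuclideanLin M)‖

noncomputable def specRad {n : ℕ} (A : Matrix (Fin n) (Fin n) ℝ)
    (hA : A.IsHermitian) : ℝ :=
  ⨆ i, |hA.eigenvalues i|

noncomputable def mtanh {m n : Type*} (M : Matrix m n ℝ) : Matrix m n ℝ :=
  Matrix.of fun i j => Real.tanh (M i j)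

noncomputable def resMap {N F Hd : ℕ} (Atil : Matrix (Fin N) (Fin N) ℝ)
    (W : Matrix (Fin Hd) (Fin Hd) ℝ) (V : Matrix (Fin F) (Fin Hd) ℝ)
    (X : Matrix (Fin N) (Fin F) ℝ) (M : Matrix (Fin N) (Fin Hd) ℝ) :
    Matrix (Fin N) (Fin Hd) ℝ :=
  mtanh (Atil * M * W + X * V)

/-!
For `A`, `W` arbitrary, the Frobenius norm of `A * M * W` is at most `‖A‖₂ * ‖M‖ * ‖W‖₂`, and the
entrywise `tanh` is nonexpansive because `tanh` is. The reservoir map is therefore a contraction in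
the Frobenius metric, with constant `‖A‖₂ * ‖W‖₂`, and Banach's a priori estimate
`K ^ t / (1 - K) * ‖H₁ - H₀‖` for the error, solved for `t`, gives the number of iterations. When
`A` is symmetric, `‖A‖₂` is its spectral radius.
-/

open scoped NNReal Matrix

theorem hasDerivAt_tanh (x : ℝ) : HasDerivAt Real.tanh (1 / Real.cosh x ^ 2) x := by
  have h := (Real.hasDerivAt_sinh x).div (Real.hasDerivAt_cosh x) (Real.cosh_pos x).ne'
  rw [← sq, ← sq, Real.cosh_sq_sub_sinh_sq] at h
  exact h.congr_of_eventuallyEq (.of_forall Real.tanh_eq_sinh_div_cosh)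

theorem lipschitzWith_tanh : LipschitzWith 1 Real.tanh := by
  refine lipschitzWith_of_nnnorm_deriv_le (fun x ↦ (hasDerivAt_tanh x).differentiableAt) fun x ↦ ?_
  rw [(hasDerivAt_tanh x).deriv, ← NNReal.coe_le_coe, coe_nnnorm, NNReal.coe_one,
    Real.norm_of_nonneg (by positivity)]
  exact div_le_one_of_le₀ (one_le_pow₀ (Real.one_le_cosh x)) (by positivity)

section FixedPoint

variable {α : Type*} [MetricSpace α] {K : ℝ≥0} {f : α → α} {y : α}

theorem dist_iterate_le_of_isFixedPt (hf : ContractingWith K f) (hy : Function.IsFixedPt f y)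
    (x : α) (n : ℕ) : dist (f^[n] x) y ≤ K ^ n * (dist x (f x) / (1 - K)) := calc
  dist (f^[n] x) y = dist (f^[n] x) (f^[n] y) := by rw [hy.iterate n]
  _ ≤ K ^ n * dist x y := by exact_mod_cast (hf.toLipschitzWith.iterate n).dist_le_mul x y
  _ ≤ K ^ n * (dist x (f x) / (1 - K)) := by gcongr; exact hf.dist_le_of_fixedPoint x hy

theorem dist_iterate_le_of_log_div_log_le (hf : ContractingWith K f)
    (hy : Function.IsFixedPt f y) (hK : 0 < K) {x : α} (hx : 0 < dist x (f x)) {ε : ℝ} (hε : 0 < ε)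
    {n : ℕ} (hn : (Real.log ε + Real.log (1 - K) - Real.log (dist x (f x))) / Real.log K ≤ n) :
    dist (f^[n] x) y ≤ ε := by
  have hK' : (0 : ℝ) < 1 - K := hf.one_sub_K_pos
  have hpow : (K : ℝ) ^ n ≤ ε * (1 - K) / dist x (f x) := by
    rwa [← Real.log_mul hε.ne' hK'.ne', ← Real.log_div (by positivity) hx.ne',
      Real.log_div_log, Real.logb_le_iff_le_rpow_of_base_lt_one (NNReal.coe_pos.2 hK)
        (NNReal.coe_lt_one.2 hf.1) (by positivity), Real.rpow_natCast] at hn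
  calc
    dist (f^[n] x) y ≤ K ^ n * (dist x (f x) / (1 - K)) := dist_iterate_le_of_isFixedPt hf hy x n
    _ ≤ ε * (1 - K) / dist x (f x) * (dist x (f x) / (1 - K)) := by gcongr
    _ = ε := by field_simp

end FixedPoint

section L2Operator

open scoped Matrix.Norms.L2Operator

variable {𝕜 n : Type*} [RCLike 𝕜] [Fintype n] [DecidableEq n]

theorem l2_opNorm_eq_iSup_abs_eigenvalues {A : Matrix n n 𝕜} (hA : A.IsHermitian) :
    ‖A‖ = ⨆ i, |hA.eigenvalues i| := by
  conv_lhs => rw [hA.spectral_theorem]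
  rw [Unitary.conjStarAlgAut_apply, ← Unitary.coe_star, CStarRing.norm_mul_coe_unitary,
    CStarRing.norm_coe_unitary_mul, Matrix.l2_opNorm_diagonal, Pi.norm_def,
    Finset.sup_univ_eq_ciSup, NNReal.coe_iSup]
  simp

theorem specNorm_eq_specRad {n : ℕ} {A : Matrix (Fin n) (Fin n) ℝ} (hA : A.IsHermitian) :
    specNorm A = specRad A hA :=
  l2_opNorm_eq_iSup_abs_eigenvalues hA

end L2Operator

section Frobenius

open scoped Matrix.Norms.Frobenius

variable {𝕜 l m n p : Type*} [RCLike 𝕜] [Fintype l] [Fintype m] [Fintype n] [Fintype p]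

theorem frobenius_norm_sq_eq_sum {α : Type*} [SeminormedAddCommGroup α] (M : Matrix m n α) :
    ‖M‖ ^ 2 = ∑ i, ∑ j, ‖M i j‖ ^ 2 := by
  rw [Matrix.frobenius_norm_def, ← Real.sqrt_eq_rpow, Real.sq_sqrt (by positivity)]
  simp only [Real.rpow_two]

theorem frobenius_norm_sq_eq_sum_col (M : Matrix m n 𝕜) :
    ‖M‖ ^ 2 = ∑ j, ‖WithLp.toLp 2 (M.col j)‖ ^ 2 := by
  rw [frobenius_norm_sq_eq_sum, Finset.sum_comm]
  simp only [EuclideanSpace.norm_sq_eq, Matrix.col_apply]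

theorem frobenius_norm_mul_le_opNorm_mul [DecidableEq m] (A : Matrix l m 𝕜) (B : Matrix m n 𝕜) :
    ‖A * B‖ ≤ ‖LinearMap.toContinuousLinearMap (Matrix.toEuclideanLin A)‖ * ‖B‖ := by
  refine le_of_sq_le_sq ?_ (by positivity)
  rw [mul_pow, frobenius_norm_sq_eq_sum_col, frobenius_norm_sq_eq_sum_col, Finset.mul_sum]
  refine Finset.sum_le_sum fun j _ ↦ ?_
  rw [← mul_pow]
  gcongr
  exact (LinearMap.toContinuousLinearMap (Matrix.toEuclideanLin A)).le_opNorm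
    (WithLp.toLp 2 (B.col j))

theorem frobenius_norm_mul_le_mul_opNorm [DecidableEq n] (A : Matrix l m 𝕜) (B : Matrix m n 𝕜) :
    ‖A * B‖ ≤ ‖A‖ * ‖LinearMap.toContinuousLinearMap (Matrix.toEuclideanLin B)‖ := by
  classical
  calc
    ‖A * B‖ = ‖Bᴴ * Aᴴ‖ := by
      rw [← Matrix.conjTranspose_mul, Matrix.frobenius_norm_conjTranspose]
    _ ≤ ‖LinearMap.toContinuousLinearMap (Matrix.toEuclideanLin Bᴴ)‖ * ‖Aᴴ‖ :=
      frobenius_norm_mul_le_opNorm_mul Bᴴ Aᴴ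
    _ = ‖LinearMap.toContinuousLinearMap (Matrix.toEuclideanLin B)‖ * ‖A‖ :=
      congrArg₂ (· * ·) (Matrix.l2_opNorm_conjTranspose B) (Matrix.frobenius_norm_conjTranspose A)
    _ = _ := mul_comm _ _

theorem lipschitzWith_matrix_map {α β : Type*} [SeminormedAddCommGroup α]
    [SeminormedAddCommGroup β] {K : ℝ≥0} {σ : α → β} (hσ : LipschitzWith K σ) :
    LipschitzWith K fun M : Matrix m n α ↦ M.map σ := by
  refine .of_dist_le_mul fun M P ↦ ?_
  rw [dist_eq_norm, dist_eq_norm]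
  refine le_of_sq_le_sq ?_ (by positivity)
  simp only [mul_pow, frobenius_norm_sq_eq_sum, Finset.mul_sum, Matrix.sub_apply, Matrix.map_apply]
  gcongr with i _ j
  rw [← mul_pow]
  gcongr
  exact hσ.norm_sub_le (M i j) (P i j)

theorem lipschitzWith_mul_mul_add [DecidableEq m] [DecidableEq p] (A : Matrix l m 𝕜)
    (W : Matrix n p 𝕜) (B : Matrix l p 𝕜) :
    LipschitzWith (‖LinearMap.toContinuousLinearMap (Matrix.toEuclideanLin A)‖₊ *
      ‖LinearMap.toContinuousLinearMap (Matrix.toEuclideanLin W)‖₊)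
      fun M : Matrix m n 𝕜 ↦ A * M * W + B := by
  refine .of_dist_le_mul fun M P ↦ ?_
  rw [dist_add_right, dist_eq_norm, dist_eq_norm, ← Matrix.sub_mul, ← Matrix.mul_sub,
    NNReal.coe_mul, coe_nnnorm, coe_nnnorm, mul_right_comm]
  grw [frobenius_norm_mul_le_mul_opNorm, frobenius_norm_mul_le_opNorm_mul]

theorem frobNorm_sub_eq_dist (M P : Matrix m n ℝ) : frobNorm (M - P) = dist P M := by
  simp only [frobNorm, dist_eq_norm_sub', Matrix.frobenius_norm_def, Real.sqrt_eq_rpow,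
    Real.rpow_two, Real.norm_eq_abs, sq_abs]

theorem lipschitzWith_resMap {N F Hd : ℕ} (A : Matrix (Fin N) (Fin N) ℝ)
    (W : Matrix (Fin Hd) (Fin Hd) ℝ) (V : Matrix (Fin F) (Fin Hd) ℝ)
    (X : Matrix (Fin N) (Fin F) ℝ) :
    LipschitzWith (‖LinearMap.toContinuousLinearMap (Matrix.toEuclideanLin A)‖₊ *
      ‖LinearMap.toContinuousLinearMap (Matrix.toEuclideanLin W)‖₊) (resMap A W V X) := by
  have h := (lipschitzWith_matrix_map lipschitzWith_tanh).comp
    (lipschitzWith_mul_mul_add A W (X * V))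
  rwa [one_mul] at h

theorem reservoir_convergence_iterations_general {N F Hd : ℕ}
    (Atil : Matrix (Fin N) (Fin N) ℝ) (W : Matrix (Fin Hd) (Fin Hd) ℝ)
    (V : Matrix (Fin F) (Fin Hd) ℝ) (X : Matrix (Fin N) (Fin F) ℝ)
    (hK0 : 0 < specNorm Atil * specNorm W) (hK1 : specNorm Atil * specNorm W < 1)
    (Hstar : Matrix (Fin N) (Fin Hd) ℝ) (hfix : resMap Atil W V X Hstar = Hstar)
    (H₀ : Matrix (Fin N) (Fin Hd) ℝ) (hh : 0 < frobNorm (resMap Atil W V X H₀ - H₀))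
    (ε : ℝ) (hε : 0 < ε) (t : ℕ)
    (ht : (Real.log ε + Real.log (1 - specNorm Atil * specNorm W)
            - Real.log (frobNorm (resMap Atil W V X H₀ - H₀)))
          / Real.log (specNorm Atil * specNorm W) ≤ (t : ℝ)) :
    frobNorm (Hstar - (resMap Atil W V X)^[t] H₀) ≤ ε := by
  rw [frobNorm_sub_eq_dist] at hh ht ⊢
  have hcontr : ContractingWith _ (resMap Atil W V X) :=
    ⟨mod_cast hK1, lipschitzWith_resMap _ _ _ _⟩
  exact dist_iterate_le_of_log_div_log_le hcontr hfix hK0 hh hε ht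

end Frobenius

/-- Theorem 1 (Convergence of reservoir systems on graphs): starting from the
zero initial condition, after t ≥ (ln ε + ln(1−K) − ln h)/ln K iterations the
state is within ε of the fixed point. -/
theorem reservoir_convergence_iterations {N F Hd : ℕ}
    (Atil : Matrix (Fin N) (Fin N) ℝ) (hA : Atil.IsHermitian)
    (W : Matrix (Fin Hd) (Fin Hd) ℝ) (V : Matrix (Fin F) (Fin Hd) ℝ)
    (X : Matrix (Fin N) (Fin F) ℝ)
    (hK0 : 0 < specRad Atil hA * specNorm W)
    (hK1 : specRad Atil hA * specNorm W < 1)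
    (Hstar : Matrix (Fin N) (Fin Hd) ℝ)
    (hfix : resMap Atil W V X Hstar = Hstar)
    (hh : 0 < frobNorm (mtanh (X * V)))
    (ε : ℝ) (hε : 0 < ε) (t : ℕ)
    (ht : (Real.log ε + Real.log (1 - specRad Atil hA * specNorm W)
            - Real.log (frobNorm (mtanh (X * V))))
          / Real.log (specRad Atil hA * specNorm W) ≤ (t : ℝ)) :
    frobNorm (Hstar - (resMap Atil W V X)^[t] 0) ≤ ε := by
  have hH₁ : resMap Atil W V X 0 - 0 = mtanh (X * V) := by simp [resMap]
  rw [← specNorm_eq_specRad] at hK0 hK1 ht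
  rw [← hH₁] at hh ht
  exact reservoir_convergence_iterations_general Atil W V X hK0 hK1 Hstar hfix 0 hh ε hε t ht
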